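/- arXiv:2312.04762 — 2 statements merged into one kernel-verified Lean document; each statement's English description precedes it below -/
import Mathlib

section
/- Let $k \ge 1$ be an integer and let $G$ be a finite simple connected graph on $n$ vertices. Then there exists a spanning subgraph $H$ of $G$ (a $(2k-1)$-spanner) such that for every pair of vertices $u, v$, the distances satisfy $d_H(u,v) \le (2k-1)\, d_G(u,v)$, and $H$ has at most $\frac{1}{2}\left(n^{1 + 1/k} + n\right)$ edges. -/
/-! A maximal subgraph `H` of `G` among those with girth greater than `2k` is a
`(2k - 1)`-spanner: an edge of `G` whose endpoints are at `H`-distance at least `2k` could be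
added to `H` without closing a short cycle.

The edges of `H` are counted with the Moore bound for irregular graphs of Alon, Hoory and
Linial. In the absence of leaves, walk `k` steps from the head of an oriented edge without
backtracking. As `H` has no short cycle, the walks end at distinct vertices, so there are at
most `n` of them. On the other hand, the number of walks is a sum over the first step, and
concavity of `log`, summed over all oriented edges, shows that the average of its logarithm is
at least `k` times the average of `log (deg v - 1)`. Hence
`∑ deg v * log (deg v - 1) ≤ (∑ deg v) * log n / k`, and convexity of `x log (x - 1)` bounds
the average degree by `1 + n ^ (1 / k)`. Removing a leaf costs one edge and one vertex, which
that bound can afford.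
-/

namespace Spanner

open SimpleGraph Finset

section Real

-- The left side is the tangent at `x = 1 + q` of the right side, a convex function of `x ≥ 2`.
lemma mul_sub_le_mul_log_sub_log {x q : ℝ} (hx : 2 ≤ x) (hq : 1 ≤ q) :
    (q + 1) / q * (x - (1 + q)) ≤ x * (Real.log (x - 1) - Real.log q) := by
  obtain ⟨y, hy⟩ : ∃ y, y = (x - 1) / q := ⟨_, rfl⟩
  have hq0 : 0 < q := by linarith
  have hy0 : 0 < y := hy ▸ div_pos (by linarith) hq0
  have hx_eq : x = q * y + 1 := by rw [hy]; field_simp; ring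
  have hqy : 1 ≤ q * y := by linarith
  have hconvex : 0 ≤ y * Real.log y - (y - 1) := by
    have := mul_le_mul_of_nonneg_left (Real.one_sub_inv_le_log_of_pos hy0) hy0.le
    rw [mul_sub, mul_inv_cancel₀ hy0.ne'] at this
    linarith
  suffices (q + 1) * (y - 1) ≤ (q * y + 1) * Real.log y by
    rw [← Real.log_div (by linarith) hq0.ne', ← hy]
    convert this using 1 <;> rw [hx_eq]
    field_simp
    ring
  rcases le_total 1 y with h | h
  · have hlog : 2 * (y - 1) ≤ (y + 1) * Real.log y := by
      have := Real.le_log_one_add_of_nonneg (sub_nonneg.2 h)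
      rw [add_sub_cancel, div_le_iff₀ (by linarith)] at this
      linarith
    linarith [mul_nonneg (sub_nonneg.2 hq) hconvex]
  · have hlog : y - y⁻¹ ≤ 2 * Real.log y := by
      have := Real.sinh_le_self_iff.2 (Real.log_nonpos hy0.le h)
      rw [Real.sinh_eq, Real.exp_neg, Real.exp_log hy0] at this
      linarith
    have hq_inv : y⁻¹ ≤ q := (inv_le_iff_one_le_mul₀ hy0).2 hqy
    have hcancel : y⁻¹ * (y * Real.log y - (y - 1)) = Real.log y - 1 + y⁻¹ := by
      field_simp
      ring
    linarith [mul_nonneg (sub_nonneg.2 hq_inv) hconvex]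

lemma card_mul_log_card_add_sum_log_le {ι : Type*} (s : Finset ι) {f : ι → ℝ}
    (hf : ∀ i ∈ s, 0 < f i) :
    #s * Real.log #s + ∑ i ∈ s, Real.log (f i) ≤ #s * Real.log (∑ i ∈ s, f i) := by
  rcases s.eq_empty_or_nonempty with rfl | hs
  · simp
  have hcard : (0 : ℝ) < #s := by exact_mod_cast hs.card_pos
  have hsum : 0 < ∑ i ∈ s, f i := sum_pos hf hs
  have jensen : ∑ i ∈ s, (#s : ℝ)⁻¹ * Real.log (f i) ≤ Real.log (∑ i ∈ s, (#s : ℝ)⁻¹ * f i) :=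
    strictConcaveOn_log_Ioi.concaveOn.le_map_sum (fun _ _ ↦ by positivity)
      (by simp [hcard.ne']) hf
  rw [← mul_sum, ← mul_sum, Real.log_mul (by positivity) hsum.ne', Real.log_inv,
    inv_mul_le_iff₀ hcard] at jensen
  linarith

lemma card_mul_log_add_sum_log_le_sum_log_sum_erase {ι : Type*} [DecidableEq ι] {s : Finset ι}
    (hs : #s ≠ 1) {f : ι → ℝ} (hf : ∀ i ∈ s, 0 < f i) :
    #s * Real.log (#s - 1) + ∑ i ∈ s, Real.log (f i) ≤
      ∑ j ∈ s, Real.log (∑ i ∈ s.erase j, f i) := by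
  rcases s.eq_empty_or_nonempty with rfl | hne
  · simp
  have hcard : (0 : ℝ) < #s - 1 := by
    have : 1 < #s := by have := hne.card_pos; omega
    exact sub_pos.2 (by exact_mod_cast this)
  have jensen : ∀ j ∈ s, (#s - 1) * Real.log (#s - 1) + (∑ i ∈ s, Real.log (f i) - Real.log (f j)) ≤
      (#s - 1) * Real.log (∑ i ∈ s.erase j, f i) := fun j hj ↦ by
    have := card_mul_log_card_add_sum_log_le (s.erase j) fun i hi ↦ hf i (mem_of_mem_erase hi)
    rwa [cast_card_erase_of_mem hj, sum_erase_eq_sub hj] at this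
  have total := sum_le_sum jensen
  simp only [sum_add_distrib, sum_sub_distrib, sum_const, nsmul_eq_mul, ← mul_sum] at total
  refine le_of_mul_le_mul_left ?_ hcard
  linarith

end Real

variable {V : Type*} {G H : SimpleGraph V}

section Girth

lemma exists_walk_notMem_edges_of_isTrail {u v w : V} {c : G.Walk w w} (hc : c.IsTrail)
    (he : s(u, v) ∈ c.edges) : ∃ p : G.Walk u v, s(u, v) ∉ p.edges ∧ p.length < c.length := by
  classical
  have hu := c.fst_mem_support_of_mem_edges he
  have hv : v ∈ (c.rotate u hu).support :=
    Walk.snd_mem_support_of_mem_edges (t := u) _ ((c.rotate_edges u hu).mem_iff.2 he)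
  have huv : u ≠ v := (c.adj_of_mem_edges he).ne
  obtain ⟨p, q, hpq⟩ := Walk.mem_support_iff_exists_append.1 hv
  have hlength : p.length + q.length = c.length := by
    rw [← Walk.length_append, ← hpq, Walk.length_rotate]
  have hdisjoint : p.edges.Disjoint q.edges := by
    have := (hc.rotate hu).edges_nodup
    rw [hpq, Walk.edges_append] at this
    exact List.disjoint_of_nodup_append this
  have hp : p.length ≠ 0 := fun h ↦ huv (Walk.eq_of_length_eq_zero h)
  have hq : q.length ≠ 0 := fun h ↦ huv.symm (Walk.eq_of_length_eq_zero h)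
  by_cases hmem : s(u, v) ∈ p.edges
  · exact ⟨q.reverse, by simpa using hdisjoint hmem, by rw [Walk.length_reverse]; omega⟩
  · exact ⟨p, hmem, by omega⟩

lemma min_egirth_edist_le_egirth_sup_edge (H : SimpleGraph V) (u v : V) :
    min H.egirth (H.edist u v + 1) ≤ (H ⊔ edge u v).egirth := by
  refine le_egirth.2 fun w c hc ↦ ?_
  have mem_edgeSet_of_ne : ∀ e ∈ (H ⊔ edge u v).edgeSet, e ≠ s(u, v) → e ∈ H.edgeSet := by
    intro e he hne
    rw [edgeSet_sup] at he
    exact he.resolve_right fun h ↦ hne (edgeSet_edge_subset h)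
  by_cases huv : s(u, v) ∈ c.edges
  · obtain ⟨p, hp, hlt⟩ := exists_walk_notMem_edges_of_isTrail hc.isTrail huv
    have hpH : ∀ e ∈ p.edges, e ∈ H.edgeSet := fun e he ↦
      mem_edgeSet_of_ne e (p.edges_subset_edgeSet he) (ne_of_mem_of_not_mem he hp)
    calc min H.egirth (H.edist u v + 1) ≤ H.edist u v + 1 := min_le_right _ _
      _ ≤ (p.transfer H hpH).length + 1 := by gcongr; exact edist_le _
      _ ≤ c.length := by rw [Walk.length_transfer]; exact_mod_cast hlt
  · have hcH : ∀ e ∈ c.edges, e ∈ H.edgeSet := fun e he ↦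
      mem_edgeSet_of_ne e (c.edges_subset_edgeSet he) (ne_of_mem_of_not_mem he huv)
    calc min H.egirth (H.edist u v + 1) ≤ H.egirth := min_le_left _ _
      _ ≤ (c.transfer H hcH).length := egirth_le_length (hc.transfer hcH)
      _ = c.length := by rw [Walk.length_transfer]

lemma egirth_le_length_add_two {v a b : V} (ha : H.Adj v a) (hb : H.Adj v b) (hab : a ≠ b)
    (p : H.Walk a b) (hv : v ∉ p.support) : H.egirth ≤ (p.length + 2 : ℕ) := by
  classical
  have hv' : v ∉ p.bypass.support := fun h ↦ hv (p.support_bypass_subset_support h)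
  have hcycle : (Walk.cons ha (p.bypass.concat hb.symm)).IsCycle := by
    rw [Walk.cons_isCycle_iff, Walk.concat_isPath_iff, Walk.edges_concat, List.concat_eq_append,
      List.mem_append, List.mem_singleton, Sym2.eq_swap, Sym2.congr_left]
    refine ⟨⟨p.bypass_isPath, hv'⟩, ?_⟩
    rintro (h | h)
    · exact hv' (Walk.snd_mem_support_of_mem_edges _ h)
    · exact hab h
  refine (egirth_le_length hcycle).trans ?_
  simp only [Walk.length_cons, Walk.length_concat]
  exact_mod_cast Nat.add_le_add_right p.length_bypass_le_length 2

end Girth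

section Branch

open Classical in
/-- The vertices at which a path of length `i + 1` starting with the edge from `u` to `v` can end.
The path is encoded by its part from `v` on, which has length `i` and avoids `u`. -/
noncomputable def branch [Fintype V] (H : SimpleGraph V) (i : ℕ) (u v : V) : Finset V :=
  {w | ∃ p : H.Walk v w, p.IsPath ∧ u ∉ p.support ∧ p.length = i}

variable [Fintype V] {i k : ℕ}

lemma mem_branch {u v w : V} :
    w ∈ branch H i u v ↔ ∃ p : H.Walk v w, p.IsPath ∧ u ∉ p.support ∧ p.length = i := by
  simp [branch]

lemma mem_branch_zero {u v : V} (huv : u ≠ v) : v ∈ branch H 0 u v :=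
  mem_branch.2 ⟨.nil, .nil, by simpa using huv, rfl⟩

lemma disjoint_branch (hgirth : (2 * i + 2 : ℕ) < H.egirth) {v a b : V} (ha : H.Adj v a)
    (hb : H.Adj v b) (hab : a ≠ b) : Disjoint (branch H i v a) (branch H i v b) := by
  refine Finset.disjoint_left.2 fun w hwa hwb ↦ hgirth.not_ge ?_
  obtain ⟨p, -, hvp, hp⟩ := mem_branch.1 hwa
  obtain ⟨q, -, hvq, hq⟩ := mem_branch.1 hwb
  have := egirth_le_length_add_two ha hb hab (p.append q.reverse) (by
    simpa [Walk.mem_support_append_iff] using ⟨hvp, hvq⟩)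
  rwa [Walk.length_append, Walk.length_reverse, hp, hq, ← two_mul] at this

lemma branch_succ [DecidableEq V] [DecidableRel H.Adj] (hgirth : (i + 2 : ℕ) < H.egirth)
    {u v : V} (huv : H.Adj v u) :
    branch H (i + 1) u v = ((H.neighborFinset v).erase u).biUnion (branch H i v) := by
  ext w
  simp only [mem_biUnion, mem_erase, mem_neighborFinset, mem_branch]
  constructor
  · rintro ⟨p, hp, hu, hlength⟩
    cases p with
    | nil => simp at hlength
    | @cons _ a _ hva p =>
      rw [Walk.cons_isPath_iff] at hp
      rw [Walk.support_cons, List.mem_cons, not_or] at hu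
      exact ⟨a, ⟨fun h ↦ hu.2 (h ▸ p.start_mem_support), hva⟩, p, hp.1, hp.2,
        Nat.succ_injective hlength⟩
  · rintro ⟨a, ⟨hau, hva⟩, p, hp, hv, rfl⟩
    refine ⟨.cons hva p, hp.cons hv, ?_, rfl⟩
    rw [Walk.support_cons, List.mem_cons, not_or]
    refine ⟨huv.ne', fun hu ↦ hgirth.not_ge ?_⟩
    calc H.egirth ≤ ((p.takeUntil u hu).length + 2 : ℕ) :=
          egirth_le_length_add_two hva huv hau _ fun h ↦
            hv (p.support_takeUntil_subset_support hu h)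
      _ ≤ (p.length + 2 : ℕ) := by
          gcongr
          exact p.length_takeUntil_le_length hu

lemma card_branch_succ [DecidableEq V] [DecidableRel H.Adj]
    (hgirth : (2 * k : ℕ) < H.egirth) (hi : i < k) {u v : V} (huv : H.Adj v u) :
    #(branch H (i + 1) u v) = ∑ a ∈ (H.neighborFinset v).erase u, #(branch H i v a) := by
  have hle {m : ℕ} (hm : m ≤ 2 * k) : (m : ℕ∞) < H.egirth :=
    (Nat.cast_le.2 hm).trans_lt hgirth
  rw [branch_succ (hle (by omega)) huv, card_biUnion]
  intro a ha b hb hab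
  rw [mem_coe, mem_erase, mem_neighborFinset] at ha hb
  exact disjoint_branch (hle (by omega)) ha.2 hb.2 hab

lemma card_branch_pos [DecidableRel H.Adj] (hdeg : ∀ v, H.degree v ≠ 1)
    (hgirth : (2 * k : ℕ) < H.egirth) (hi : i ≤ k) {u v : V} (huv : H.Adj v u) :
    0 < #(branch H i u v) := by
  classical
  induction i generalizing u v with
  | zero => exact card_pos.2 ⟨v, mem_branch_zero huv.ne'⟩
  | succ i ih =>
    rw [card_branch_succ hgirth hi huv]
    refine sum_pos (fun a ha ↦ ih (by omega) ?_) ?_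
    · exact ((H.mem_neighborFinset v a).1 (mem_of_mem_erase ha)).symm
    · have hmem : u ∈ H.neighborFinset v := (H.mem_neighborFinset v u).2 huv
      have : 0 < H.degree v := card_pos.2 ⟨u, hmem⟩
      rw [← card_pos, card_erase_of_mem hmem, card_neighborFinset_eq_degree]
      have := hdeg v
      omega

end Branch

section EdgeBound

lemma exists_le_forall_not_existsUnique_adj [Finite V] (H : SimpleGraph V) :
    ∃ K ≤ H, (∀ v, ¬ ∃! w, K.Adj v w) ∧
      H.edgeSet.ncard + K.support.ncard ≤ K.edgeSet.ncard + H.support.ncard := by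
  induction H using WellFoundedLT.induction with
  | ind H ih =>
  by_cases hleaf : ∀ v, ¬ ∃! w, H.Adj v w
  · exact ⟨H, le_rfl, hleaf, le_rfl⟩
  push Not at hleaf
  obtain ⟨v, w, hvw, hunique⟩ := hleaf
  obtain ⟨H', hH'⟩ : ∃ H', H' = H.deleteEdges {s(v, w)} := ⟨_, rfl⟩
  have hle : H' ≤ H := hH' ▸ H.deleteEdges_le _
  have hv : v ∉ H'.support := by
    rintro ⟨x, hx : H'.Adj v x⟩
    rw [hH', deleteEdges_adj] at hx
    exact hx.2 (hunique x hx.1 ▸ rfl)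
  have hsupport : H'.support.ncard < H.support.ncard :=
    Set.ncard_lt_ncard ⟨support_mono hle, fun h ↦ hv (h hvw.left_mem_support)⟩
  have hedges : H'.edgeSet.ncard + 1 = H.edgeSet.ncard := by
    rw [hH', edgeSet_deleteEdges]
    exact Set.ncard_sdiff_singleton_add_one hvw
  obtain ⟨K, hK, hKleaf, hcount⟩ := ih H' (hle.lt_of_ne fun h ↦ hsupport.ne (by rw [h]))
  exact ⟨K, hK.trans hle, hKleaf, by omega⟩

variable [Fintype V] {k : ℕ}

lemma sum_sum_neighborFinset_comm (H : SimpleGraph V) [DecidableRel H.Adj] {M : Type*}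
    [AddCommMonoid M] (f : V → V → M) :
    ∑ v, ∑ u ∈ H.neighborFinset v, f u v = ∑ v, ∑ u ∈ H.neighborFinset v, f v u :=
  sum_comm' (by simp [H.adj_comm])

lemma mul_sum_degree_mul_log_le_sum_log_card_branch [DecidableRel H.Adj]
    (hdeg : ∀ v, H.degree v ≠ 1) (hgirth : (2 * k : ℕ) < H.egirth) {i : ℕ} (hi : i ≤ k) :
    i * ∑ v, H.degree v * Real.log (H.degree v - 1) ≤
      ∑ v, ∑ u ∈ H.neighborFinset v, Real.log #(branch H i u v) := by
  classical
  induction i with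
  | zero =>
    rw [Nat.cast_zero, zero_mul]
    exact sum_nonneg fun v _ ↦ sum_nonneg fun u _ ↦ Real.log_natCast_nonneg _
  | succ i ih =>
    have hvertex (v : V) : H.degree v * Real.log (H.degree v - 1) +
        ∑ a ∈ H.neighborFinset v, Real.log #(branch H i v a) ≤
        ∑ u ∈ H.neighborFinset v, Real.log #(branch H (i + 1) u v) := by
      have := card_mul_log_add_sum_log_le_sum_log_sum_erase (s := H.neighborFinset v)
        (by simpa using hdeg v) (f := fun a ↦ (#(branch H i v a) : ℝ)) fun a ha ↦
          Nat.cast_pos.2 <| card_branch_pos hdeg hgirth (by omega)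
            ((H.mem_neighborFinset v a).1 ha).symm
      rw [card_neighborFinset_eq_degree] at this
      refine this.trans_eq (sum_congr rfl fun u hu ↦ ?_)
      rw [card_branch_succ hgirth hi ((H.mem_neighborFinset v u).1 hu), Nat.cast_sum]
    calc ((i + 1 : ℕ) : ℝ) * ∑ v, H.degree v * Real.log (H.degree v - 1)
        = ∑ v, H.degree v * Real.log (H.degree v - 1) +
            i * ∑ v, H.degree v * Real.log (H.degree v - 1) := by push_cast; ring
      _ ≤ ∑ v, H.degree v * Real.log (H.degree v - 1) +
            ∑ v, ∑ a ∈ H.neighborFinset v, Real.log #(branch H i v a) := by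
          rw [← sum_sum_neighborFinset_comm H fun u v ↦ Real.log #(branch H i u v)]
          gcongr
          exact ih (by omega)
      _ ≤ ∑ v, ∑ u ∈ H.neighborFinset v, Real.log #(branch H (i + 1) u v) := by
          rw [← sum_add_distrib]
          exact sum_le_sum fun v _ ↦ hvertex v

lemma mul_sum_degree_mul_log_le [DecidableRel H.Adj] (hdeg : ∀ v, H.degree v ≠ 1)
    (hgirth : (2 * k : ℕ) < H.egirth) :
    k * ∑ v, H.degree v * Real.log (H.degree v - 1) ≤
      (∑ v, H.degree v) * Real.log (Fintype.card V) := by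
  classical
  refine (mul_sum_degree_mul_log_le_sum_log_card_branch hdeg hgirth le_rfl).trans ?_
  rw [Nat.cast_sum, sum_mul]
  refine sum_le_sum fun v _ ↦ ?_
  rw [← card_neighborFinset_eq_degree, ← nsmul_eq_mul]
  refine sum_le_card_nsmul _ _ _ fun u hu ↦ Real.log_le_log ?_ ?_
  · exact Nat.cast_pos.2 (card_branch_pos hdeg hgirth le_rfl ((H.mem_neighborFinset v u).1 hu))
  · exact Nat.cast_le.2 (card_le_univ _)

lemma sum_degree_le_of_degree_ne_one [DecidableRel H.Adj] (hk : k ≠ 0)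
    (hdeg : ∀ v, H.degree v ≠ 1) (hgirth : (2 * k : ℕ) < H.egirth) {q : ℝ} (hq : 1 ≤ q)
    (hcard : Fintype.card V ≤ q ^ k) :
    (∑ v, H.degree v : ℝ) ≤ H.support.ncard * (1 + q) := by
  classical
  rcases isEmpty_or_nonempty V with _ | _
  · rw [univ_eq_empty, sum_empty]
    positivity
  have hlog_card : Real.log (Fintype.card V) ≤ k * Real.log q := by
    rw [← Real.log_pow]
    exact Real.log_le_log (by exact_mod_cast Fintype.card_pos) hcard
  have hlog_sum : ∑ v, H.degree v * (Real.log (H.degree v - 1) - Real.log q) ≤ 0 := by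
    have hupper := (mul_sum_degree_mul_log_le hdeg hgirth).trans
      (mul_le_mul_of_nonneg_left hlog_card (Nat.cast_nonneg _))
    have hk' : (0 : ℝ) < k := by positivity
    refine nonpos_of_mul_nonpos_right ?_ hk'
    simp only [mul_sub, sum_sub_distrib, ← sum_mul]
    push_cast at hupper
    linarith
  have htangent (v : V) : (q + 1) / q * (H.degree v - if v ∈ H.support then 1 + q else 0) ≤
      H.degree v * (Real.log (H.degree v - 1) - Real.log q) := by
    split_ifs with hv
    · have : 0 < H.degree v := (H.degree_pos_iff_mem_support v).2 hv
      have : 2 ≤ H.degree v := by have := hdeg v; omega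
      exact mul_sub_le_mul_log_sub_log (by exact_mod_cast this) hq
    · simp [(H.degree_eq_zero_iff_notMem_support v).2 hv]
  have htotal := (sum_le_sum fun v _ ↦ htangent v).trans hlog_sum
  rw [← mul_sum, sum_sub_distrib, ← sum_filter, sum_const, nsmul_eq_mul] at htotal
  have hsupport : #{v | v ∈ H.support} = H.support.ncard := by
    rw [← Set.ncard_coe_finset, coe_filter_univ]
    rfl
  rw [hsupport] at htotal
  exact sub_nonpos.1 (nonpos_of_mul_nonpos_right htotal (by positivity))

lemma two_mul_ncard_edgeSet_le_ncard_support_mul (hk : k ≠ 0) (hgirth : (2 * k : ℕ) < H.egirth)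
    {q : ℝ} (hq : 1 ≤ q) (hcard : Fintype.card V ≤ q ^ k) :
    2 * (H.edgeSet.ncard : ℝ) ≤ H.support.ncard * (1 + q) := by
  classical
  obtain ⟨K, hle, hleaf, hcount⟩ := exists_le_forall_not_existsUnique_adj H
  have hK : 2 * (K.edgeSet.ncard : ℝ) ≤ K.support.ncard * (1 + q) := by
    have hdeg (v : V) : K.degree v ≠ 1 := fun h ↦
      hleaf v (degree_eq_one_iff_existsUnique_adj.1 h)
    have hgirthK : (2 * k : ℕ) < K.egirth := hgirth.trans_le (egirth_anti hle)
    have hbound := sum_degree_le_of_degree_ne_one hk hdeg hgirthK hq hcard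
    rwa [← Nat.cast_sum, sum_degrees_eq_twice_card_edges, ← Set.ncard_coe_finset, coe_edgeFinset,
      Nat.cast_mul, Nat.cast_ofNat] at hbound
  have hcount' : (H.edgeSet.ncard : ℝ) + K.support.ncard ≤ K.edgeSet.ncard + H.support.ncard := by
    exact_mod_cast hcount
  have hsupport : (K.support.ncard : ℝ) ≤ H.support.ncard := by
    exact_mod_cast Set.ncard_le_ncard (support_mono hle)
  linarith [mul_nonneg (sub_nonneg.2 hsupport) (sub_nonneg.2 hq)]

end EdgeBound

theorem ncard_edgeSet_le_of_lt_egirth [Finite V] {k : ℕ} (hk : k ≠ 0)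
    (hgirth : (2 * k : ℕ) < H.egirth) :
    (H.edgeSet.ncard : ℝ) ≤ ((Nat.card V : ℝ) ^ (1 + 1 / (k : ℝ)) + Nat.card V) / 2 := by
  have := Fintype.ofFinite V
  rcases isEmpty_or_nonempty V with _ | _
  · rw [Set.eq_empty_of_isEmpty H.edgeSet, Set.ncard_empty, Nat.cast_zero]
    positivity
  have hn : (1 : ℝ) ≤ Nat.card V := by exact_mod_cast Nat.card_pos (α := V)
  obtain ⟨q, hq_def⟩ : ∃ q, q = (Nat.card V : ℝ) ^ (1 / (k : ℝ)) := ⟨_, rfl⟩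
  have hq : 1 ≤ q := hq_def ▸ Real.one_le_rpow hn (by positivity)
  have hqk : q ^ k = Nat.card V := by
    rw [hq_def, one_div, Real.rpow_inv_natCast_pow (Nat.cast_nonneg _) hk]
  have hsupport : (H.support.ncard : ℝ) ≤ Nat.card V := by
    exact_mod_cast Set.ncard_le_card H.support
  have hedges : 2 * (H.edgeSet.ncard : ℝ) ≤ Nat.card V * (1 + q) :=
    (two_mul_ncard_edgeSet_le_ncard_support_mul hk hgirth hq
      (by rw [hqk, Nat.card_eq_fintype_card])).trans (by gcongr)
  rw [Real.rpow_add (by linarith), Real.rpow_one, ← hq_def]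
  linarith

/-- `H` is a `t`-spanner of `G`: a subgraph on the same vertices that stretches distances by a
factor of at most `t`. Distances are extended, so that for `t ≠ 0` an unreachable pair of vertices
of `G` imposes no condition, and `G` need not be connected. -/
structure IsSpanner (t : ℕ) (H G : SimpleGraph V) : Prop where
  le : H ≤ G
  edist_le (u v : V) : H.edist u v ≤ t * G.edist u v

namespace IsSpanner

variable {t : ℕ}

lemma of_adj (ht : t ≠ 0) (hle : H ≤ G) (hadj : ∀ u v, G.Adj u v → H.edist u v ≤ t) :
    IsSpanner t H G := by
  have edist_le_length {u v : V} (p : G.Walk u v) : H.edist u v ≤ t * p.length := by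
    induction p with
    | nil => simp
    | @cons u x v hux p ih =>
      calc H.edist u v ≤ H.edist u x + H.edist x v := SimpleGraph.edist_triangle
        _ ≤ t + t * p.length := add_le_add (hadj u x hux) ih
        _ = t * (Walk.cons hux p).length := by push_cast [Walk.length_cons]; ring
  refine ⟨hle, fun u v ↦ ?_⟩
  by_cases huv : G.Reachable u v
  · obtain ⟨p, hp⟩ := huv.exists_walk_length_eq_edist
    exact hp ▸ edist_le_length p
  · simp [edist_eq_top_of_not_reachable huv, ENat.mul_top, ht]

lemma reachable (h : IsSpanner t H G) {u v : V} (huv : G.Reachable u v) : H.Reachable u v :=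
  reachable_of_edist_ne_top <| ne_top_of_le_ne_top
    (WithTop.mul_ne_top (ENat.natCast_ne_top t) (edist_ne_top_iff_reachable.2 huv)) (h.edist_le u v)

lemma connected (h : IsSpanner t H G) (hG : G.Connected) : H.Connected :=
  (connected_iff H).2 ⟨fun u v ↦ h.reachable (hG u v), hG.nonempty⟩

lemma dist_le (h : IsSpanner t H G) (hG : G.Connected) (u v : V) :
    H.dist u v ≤ t * G.dist u v := by
  have := h.edist_le u v
  rw [← (hG u v).coe_dist_eq_edist, ← (h.reachable (hG u v)).coe_dist_eq_edist] at this
  exact_mod_cast this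

end IsSpanner

lemma exists_isSpanner_lt_egirth [Finite V] {k : ℕ} (hk : k ≠ 0) (G : SimpleGraph V) :
    ∃ H, IsSpanner (2 * k - 1) H G ∧ (2 * k : ℕ) < H.egirth := by
  obtain ⟨H, -, ⟨hle, hgirth⟩, hmax⟩ := Finite.exists_le_maximal
    (p := fun H : SimpleGraph V ↦ H ≤ G ∧ (2 * k : ℕ) < H.egirth) (a := ⊥)
    ⟨bot_le, by simpa using ENat.natCast_lt_top (2 * k)⟩
  refine ⟨H, .of_adj (by omega) hle fun u v huv ↦ ?_, hgirth⟩
  by_contra! hfar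
  have hfar' : (2 * k : ℕ) < H.edist u v + 1 := by
    rw [show 2 * k = 2 * k - 1 + 1 by omega, Nat.cast_succ]
    exact (ENat.add_lt_add_iff_right ENat.one_ne_top).2 hfar
  have hnotAdj : ¬ H.Adj u v := fun h ↦ by
    rw [edist_eq_one_iff_adj.2 h] at hfar
    norm_cast at hfar
    omega
  have hadj : (H ⊔ edge u v).Adj u v := by simp [edge_adj, huv.ne]
  have hmem : H ⊔ edge u v ≤ G ∧ (2 * k : ℕ) < (H ⊔ edge u v).egirth :=
    ⟨sup_le hle ((edge_le_iff G).2 (.inr huv)),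
      (lt_min hgirth hfar').trans_le (min_egirth_edist_le_egirth_sup_edge H u v)⟩
  exact hnotAdj (hmax hmem le_sup_left hadj)

end Spanner

theorem exists_spanner_general {V : Type*} [Finite V] (k : ℕ) (hk : 1 ≤ k) (G : SimpleGraph V) :
    ∃ H : SimpleGraph V, Spanner.IsSpanner (2 * k - 1) H G ∧
      (H.edgeSet.ncard : ℝ) ≤
        ((Nat.card V : ℝ) ^ ((1 : ℝ) + 1 / (k : ℝ)) + (Nat.card V : ℝ)) / 2 := by
  have hk0 : k ≠ 0 := Nat.ne_of_gt hk
  obtain ⟨H, hspanner, hgirth⟩ := Spanner.exists_isSpanner_lt_egirth hk0 G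
  exact ⟨H, hspanner, Spanner.ncard_edgeSet_le_of_lt_egirth hk0 hgirth⟩

/-- **Greedy `(2k-1)`-spanners.**  Every finite simple connected graph `G` on `n`
vertices has a connected spanning subgraph `H` with
`d_H(u,v) ≤ (2k-1) d_G(u,v)` for all vertices `u, v`, and with at most
`(n^{1+1/k} + n) / 2` edges. -/
theorem exists_spanner
    {n : ℕ} (k : ℕ) (hk : 1 ≤ k) (G : SimpleGraph (Fin n)) (hG : G.Connected) :
    ∃ H : SimpleGraph (Fin n), H ≤ G ∧ H.Connected ∧
      (∀ u v : Fin n, H.dist u v ≤ (2 * k - 1) * G.dist u v) ∧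
      (H.edgeSet.ncard : ℝ) ≤ ((n : ℝ) ^ ((1 : ℝ) + 1 / (k : ℝ)) + (n : ℝ)) / 2 := by
  obtain ⟨H, hspanner, hedges⟩ := exists_spanner_general k hk G
  exact ⟨H, hspanner.le, hspanner.connected hG, hspanner.dist_le hG, by simpa using hedges⟩
end

section
/- Let $G$ be a finite simple graph on $n$ vertices with nonnegative edge weights $w : E \to \mathbb{R}_{\ge 0}$ and weighted combinatorial Laplacian $L_G$. Then for every real $d > 1$ there exist nonnegative edge weights $w' : E \to \mathbb{R}_{\ge 0}$ that are nonzero on at most $\lceil d (n-1) \rceil$ edges such that the reweighted Laplacian $L_H$ satisfies, for all $x \in \mathbb{R}^V$, $x^\top L_G x \le x^\top L_H x \le \frac{d + 1 + 2\sqrt{d}}{d + 1 - 2\sqrt{d}} \, x^\top L_G x$. -/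
open Matrix Finset

/-- The weighted combinatorial Laplacian `∑_{(i,j) ∈ E} w(i,j) (eᵢ-eⱼ)(eᵢ-eⱼ)ᵀ`
associated with a symmetric weight function `w` (each unordered edge counted once,
whence the factor `1/2` in front of the sum over ordered pairs). -/
noncomputable def weightedLapMatrix {n : ℕ} (w : Fin n → Fin n → ℝ) :
    Matrix (Fin n) (Fin n) ℝ :=
  (1 / 2 : ℝ) • ∑ i : Fin n, ∑ j : Fin n,
    w i j • Matrix.vecMulVec (Pi.single i (1 : ℝ) - Pi.single j 1)
      (Pi.single i (1 : ℝ) - Pi.single j 1)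

/-!
By a rank factorization of `L_G` it suffices to sparsify a decomposition `∑ vᵢ vᵢᵀ = 1` of the
identity of size `k`. Following Batson, Spielman and Srivastava, build `A = ∑ sᵢ vᵢ vᵢᵀ` one
rank-one update at a time, keeping its spectrum between barriers `l < u` that both advance by
constant amounts in every step. The potentials `tr (A - l)⁻¹` and `tr (u - A)⁻¹` measure how close
the spectrum comes to the barriers. Averaging over `i` shows that some multiple of some `vᵢ vᵢᵀ` may
be added without increasing either potential, so the process never gets stuck; after `⌈d k⌉` steps
the ratio `u / l` is at most `(d + 1 + 2 √d) / (d + 1 - 2 √d)`.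
-/

section RankOneUpdate

theorem isHermitian_vecMulVec_self {κ : Type*} (v : κ → ℝ) : (vecMulVec v v).IsHermitian := by
  simp [IsHermitian]

variable {κ : Type*} [Fintype κ]

theorem sum_dotProduct_mulVec_self {ι R : Type*} [Fintype ι] [CommSemiring R] (v : ι → κ → R)
    (K : Matrix κ κ R) :
    ∑ i, v i ⬝ᵥ K *ᵥ v i = (K * ∑ i, vecMulVec (v i) (v i)).trace := by
  simp only [Finset.mul_sum, trace_sum, mul_vecMulVec, trace_vecMulVec, dotProduct_comm]

theorem dotProduct_vecMulVec_self_mulVec {R : Type*} [CommSemiring R] (v x : κ → R) :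
    x ⬝ᵥ vecMulVec v v *ᵥ x = (v ⬝ᵥ x) ^ 2 := by
  rw [vecMulVec_mulVec, op_smul_eq_smul, dotProduct_smul, smul_eq_mul, dotProduct_comm x, sq]

variable [DecidableEq κ]

theorem inv_add_smul_vecMulVec {K : Type*} [Field K] {A : Matrix κ κ K} (hA : IsUnit A)
    (u v : κ → K) (t : K) (ht : 1 + t * (v ⬝ᵥ A⁻¹ *ᵥ u) ≠ 0) :
    (A + t • vecMulVec u v)⁻¹ =
      A⁻¹ - (t / (1 + t * (v ⬝ᵥ A⁻¹ *ᵥ u))) • vecMulVec (A⁻¹ *ᵥ u) (v ᵥ* A⁻¹) := by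
  have hAA : A * A⁻¹ = 1 := mul_nonsing_inv A ((isUnit_iff_isUnit_det A).1 hA)
  have hAu : A *ᵥ A⁻¹ *ᵥ u = u := by rw [mulVec_mulVec, hAA, one_mulVec]
  refine inv_eq_right_inv ?_
  set c := v ⬝ᵥ A⁻¹ *ᵥ u
  have hcoeff : t - t / (1 + t * c) - t * (t / (1 + t * c)) * c = 0 := by
    field_simp
    ring
  calc (A + t • vecMulVec u v) * (A⁻¹ - (t / (1 + t * c)) • vecMulVec (A⁻¹ *ᵥ u) (v ᵥ* A⁻¹))
      = 1 + (t - t / (1 + t * c) - t * (t / (1 + t * c)) * c) • vecMulVec u (v ᵥ* A⁻¹) := by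
        rw [Matrix.add_mul, Matrix.mul_sub, Matrix.mul_sub, hAA, Matrix.mul_smul, mul_vecMulVec,
          hAu, Matrix.smul_mul, vecMulVec_mul, Matrix.smul_mul, Matrix.mul_smul,
          vecMulVec_mul_vecMulVec, vecMulVec_smul]
        module
    _ = 1 := by rw [hcoeff, zero_smul, add_zero]

theorem trace_inv_add_smul_vecMulVec {K : Type*} [Field K] {A : Matrix κ κ K} (hA : IsUnit A)
    (u v : κ → K) (t : K) (ht : 1 + t * (v ⬝ᵥ A⁻¹ *ᵥ u) ≠ 0) :
    (A + t • vecMulVec u v)⁻¹.trace =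
      A⁻¹.trace - t / (1 + t * (v ⬝ᵥ A⁻¹ *ᵥ u)) * (v ⬝ᵥ (A⁻¹ ^ 2) *ᵥ u) := by
  rw [inv_add_smul_vecMulVec hA u v t ht, trace_sub, trace_smul, trace_vecMulVec, smul_eq_mul,
    dotProduct_comm (A⁻¹ *ᵥ u), ← dotProduct_mulVec, mulVec_mulVec, ← sq]

theorem sq_dotProduct_le_of_posDef {M : Matrix κ κ ℝ} (hM : M.PosDef) (v x : κ → ℝ) :
    (v ⬝ᵥ x) ^ 2 ≤ (v ⬝ᵥ M⁻¹ *ᵥ v) * (x ⬝ᵥ M *ᵥ x) := by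
  have hunit : IsUnit M.det := (isUnit_iff_isUnit_det M).1 hM.isUnit
  have hMM : M *ᵥ M⁻¹ *ᵥ v = v := by rw [mulVec_mulVec, mul_nonsing_inv M hunit, one_mulVec]
  have hsymm : M.IsSymm := hM.isHermitian
  have hvM : (M⁻¹ *ᵥ v) ᵥ* M = v := by rw [← mulVec_transpose, hsymm.eq, hMM]
  have hcs := LinearMap.BilinForm.apply_sq_le_of_symm (toBilin' M)
    (fun y => by simpa [toBilin'_apply'] using hM.posSemidef.dotProduct_mulVec_nonneg y)
    ⟨(isSymm_toBilin'_iff_isSymm.2 hsymm).eq⟩ (M⁻¹ *ᵥ v) x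
  simpa only [toBilin'_apply', dotProduct_mulVec _ M, hvM, dotProduct_comm _ v] using hcs

theorem posDef_sub_smul_vecMulVec {M : Matrix κ κ ℝ} (hM : M.PosDef) {v : κ → ℝ} {t : ℝ}
    (ht : t * (v ⬝ᵥ M⁻¹ *ᵥ v) < 1) : (M - t • vecMulVec v v).PosDef := by
  refine .of_dotProduct_mulVec_pos (hM.isHermitian.sub
    ((isHermitian_vecMulVec_self v).smul (.all t))) fun x hx => ?_
  have hMx : 0 < x ⬝ᵥ M *ᵥ x := by simpa only [star_trivial] using hM.dotProduct_mulVec_pos hx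
  have hcs := sq_dotProduct_le_of_posDef hM v x
  rw [star_trivial, sub_mulVec, smul_mulVec, dotProduct_sub, dotProduct_smul, smul_eq_mul,
    dotProduct_vecMulVec_self_mulVec]
  rcases le_total 0 t with h0 | h0
  · nlinarith
  · nlinarith

theorem dotProduct_self_le_trace_inv_mul {M : Matrix κ κ ℝ} (hM : M.PosDef) (x : κ → ℝ) :
    x ⬝ᵥ x ≤ M⁻¹.trace * (x ⬝ᵥ M *ᵥ x) :=
  calc x ⬝ᵥ x = ∑ i, (Pi.single i 1 ⬝ᵥ x) ^ 2 := by simp only [single_one_dotProduct, sq]; rfl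
    _ ≤ ∑ i, (Pi.single i 1 ⬝ᵥ M⁻¹ *ᵥ Pi.single i 1) * (x ⬝ᵥ M *ᵥ x) :=
      Finset.sum_le_sum fun i _ => sq_dotProduct_le_of_posDef hM _ x
    _ = M⁻¹.trace * (x ⬝ᵥ M *ᵥ x) := by simp [trace, Finset.sum_mul]

theorem posDef_sub_smul_one {M : Matrix κ κ ℝ} (hM : M.PosDef) {δ : ℝ}
    (hδ : δ * M⁻¹.trace < 1) : (M - δ • (1 : Matrix κ κ ℝ)).PosDef := by
  refine .of_dotProduct_mulVec_pos (hM.isHermitian.sub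
    (isHermitian_one.smul (.all δ))) fun x hx => ?_
  have hMx : 0 < x ⬝ᵥ M *ᵥ x := by simpa only [star_trivial] using hM.dotProduct_mulVec_pos hx
  have hxx : x ⬝ᵥ x ≤ M⁻¹.trace * (x ⬝ᵥ M *ᵥ x) := dotProduct_self_le_trace_inv_mul hM x
  rw [star_trivial, sub_mulVec, smul_mulVec, one_mulVec, dotProduct_sub, dotProduct_smul,
    smul_eq_mul]
  rcases le_total 0 δ with h0 | h0
  · nlinarith
  · have : 0 ≤ x ⬝ᵥ x := by simpa using dotProduct_star_self_nonneg x
    nlinarith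

end RankOneUpdate

section Shift

variable {κ : Type*} [Fintype κ] [DecidableEq κ]

theorem inv_sub_inv_add_smul_one {R : Type*} [CommRing R] {M : Matrix κ κ R} {δ : R}
    (hM : IsUnit M) (hN : IsUnit (M + δ • (1 : Matrix κ κ R))) :
    M⁻¹ - (M + δ • (1 : Matrix κ κ R))⁻¹ = δ • (M⁻¹ * (M + δ • (1 : Matrix κ κ R))⁻¹) := by
  rw [inv_sub_inv (iff_of_true hM hN), add_sub_cancel_left, Matrix.mul_smul, Matrix.mul_one,
    Matrix.smul_mul]

theorem trace_inv_sub_trace_inv_add_smul_one {R : Type*} [CommRing R] {M : Matrix κ κ R} {δ : R}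
    (hM : IsUnit M) (hN : IsUnit (M + δ • (1 : Matrix κ κ R))) :
    M⁻¹.trace - (M + δ • (1 : Matrix κ κ R))⁻¹.trace =
      δ * ((M + δ • (1 : Matrix κ κ R))⁻¹ ^ 2).trace +
        δ ^ 2 * ((M + δ • (1 : Matrix κ κ R))⁻¹ * M⁻¹ *
          (M + δ • (1 : Matrix κ κ R))⁻¹).trace := by
  set N := M + δ • (1 : Matrix κ κ R)
  have hresolvent : M⁻¹ - N⁻¹ = δ • (M⁻¹ * N⁻¹) := inv_sub_inv_add_smul_one hM hN
  have hM' : M⁻¹ = N⁻¹ + δ • (M⁻¹ * N⁻¹) := by rw [← hresolvent, add_sub_cancel]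
  rw [← trace_sub, hresolvent, trace_smul, smul_eq_mul, trace_mul_comm]
  nth_rw 1 [hM']
  rw [Matrix.mul_add, Matrix.mul_smul, trace_add, trace_smul, smul_eq_mul, ← Matrix.mul_assoc, sq]
  ring

theorem mul_trace_inv_sq_lt [Nonempty κ] {M : Matrix κ κ ℝ} (hM : M.PosDef) {δ : ℝ}
    (hδ : 0 < δ) :
    δ * ((M + δ • (1 : Matrix κ κ ℝ))⁻¹ ^ 2).trace <
      M⁻¹.trace - (M + δ • (1 : Matrix κ κ ℝ))⁻¹.trace := by
  have hN : (M + δ • (1 : Matrix κ κ ℝ)).PosDef := hM.add (PosDef.one.smul hδ)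
  have hpos : 0 < ((M + δ • (1 : Matrix κ κ ℝ))⁻¹ * M⁻¹ *
      (M + δ • (1 : Matrix κ κ ℝ))⁻¹).trace := by
    have hconj := hM.inv.mul_mul_conjTranspose_same (vecMul_injective_of_isUnit hN.inv.isUnit)
    rw [hN.inv.isHermitian.eq] at hconj
    exact hconj.trace_pos
  rw [trace_inv_sub_trace_inv_add_smul_one hM.isUnit hN.isUnit]
  exact lt_add_of_pos_right _ (mul_pos (pow_pos hδ 2) hpos)

theorem trace_inv_add_smul_one_lt [Nonempty κ] {M : Matrix κ κ ℝ} (hM : M.PosDef) {δ : ℝ}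
    (hδ : 0 < δ) : (M + δ • (1 : Matrix κ κ ℝ))⁻¹.trace < M⁻¹.trace := by
  have hN : (M + δ • (1 : Matrix κ κ ℝ)).PosDef := hM.add (PosDef.one.smul hδ)
  have hnonneg : 0 ≤ ((M + δ • (1 : Matrix κ κ ℝ))⁻¹ ^ 2).trace :=
    (hN.inv.posSemidef.pow 2).trace_nonneg
  linarith [mul_trace_inv_sq_lt hM hδ, mul_nonneg hδ.le hnonneg]

theorem trace_inv_lt_trace_inv_sub_smul_one [Nonempty κ] {M : Matrix κ κ ℝ} {δ : ℝ} (hδ : 0 < δ)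
    (hR : (M - δ • (1 : Matrix κ κ ℝ)).PosDef) :
    M⁻¹.trace < (M - δ • (1 : Matrix κ κ ℝ))⁻¹.trace := by
  simpa only [sub_add_cancel] using trace_inv_add_smul_one_lt hR hδ

theorem sq_trace_inv_sub_trace_inv_le {M : Matrix κ κ ℝ} (hM : M.PosDef) {δ : ℝ} (hδ : 0 ≤ δ)
    (htr : δ * M⁻¹.trace ≤ 1) (hR : (M - δ • (1 : Matrix κ κ ℝ)).PosDef) :
    ((M - δ • (1 : Matrix κ κ ℝ))⁻¹.trace - M⁻¹.trace) ^ 2 ≤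
      δ * ((M - δ • (1 : Matrix κ κ ℝ))⁻¹ * M⁻¹ * (M - δ • (1 : Matrix κ κ ℝ))⁻¹).trace := by
  have hR' : M - δ • (1 : Matrix κ κ ℝ) = M + (-δ) • (1 : Matrix κ κ ℝ) := by
    rw [neg_smul, sub_eq_add_neg]
  have hresolvent := inv_sub_inv_add_smul_one hM.isUnit (hR' ▸ hR.isUnit)
  rw [← hR'] at hresolvent
  set R := M - δ • (1 : Matrix κ κ ℝ)
  set D := R⁻¹.trace - M⁻¹.trace with hD
  set T := (R⁻¹ * M⁻¹ * R⁻¹).trace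
  have hDX : D = δ * (M⁻¹ * R⁻¹).trace := by
    have := congrArg trace hresolvent
    rw [trace_sub, trace_smul, smul_eq_mul] at this
    linarith [hD]
  /- Cauchy–Schwarz for `(Y, Z) ↦ tr (Yᵀ M⁻¹ Z)` at `Y = R⁻¹` and `Z = 1`, as the
  nonnegativity of a square, with the nearly optimal multiple `D` of `Z`. -/
  have hsq : 0 ≤ T - 2 * D * (M⁻¹ * R⁻¹).trace + D ^ 2 * M⁻¹.trace := by
    have hherm : (R⁻¹ - D • (1 : Matrix κ κ ℝ)).IsHermitian :=
      hR.inv.isHermitian.sub (isHermitian_one.smul (.all D))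
    have hnonneg := (hM.inv.posSemidef.mul_mul_conjTranspose_same
      (R⁻¹ - D • (1 : Matrix κ κ ℝ))).trace_nonneg
    rw [hherm.eq] at hnonneg
    simp only [Matrix.sub_mul, Matrix.mul_sub, Matrix.smul_mul, Matrix.mul_smul, Matrix.one_mul,
      Matrix.mul_one, trace_sub, trace_smul, smul_eq_mul, trace_mul_comm R⁻¹ M⁻¹] at hnonneg
    linarith
  have htrD : D ^ 2 * (δ * M⁻¹.trace) ≤ D ^ 2 * 1 := mul_le_mul_of_nonneg_left htr (sq_nonneg D)
  have hδsq := mul_nonneg hδ hsq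
  have hexpand : δ * (T - 2 * D * (M⁻¹ * R⁻¹).trace + D ^ 2 * M⁻¹.trace) =
      δ * T - 2 * D * (δ * (M⁻¹ * R⁻¹).trace) + D ^ 2 * (δ * M⁻¹.trace) := by ring
  rw [hexpand, ← hDX] at hδsq
  linarith

theorem mul_le_trace_inv_sq {M : Matrix κ κ ℝ} (hM : M.PosDef) {δ : ℝ} (hδ : 0 < δ)
    (htr : δ * M⁻¹.trace ≤ 1) (hR : (M - δ • (1 : Matrix κ κ ℝ)).PosDef) :
    ((M - δ • (1 : Matrix κ κ ℝ))⁻¹.trace - M⁻¹.trace) *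
        (1 / δ + ((M - δ • (1 : Matrix κ κ ℝ))⁻¹.trace - M⁻¹.trace)) ≤
      ((M - δ • (1 : Matrix κ κ ℝ))⁻¹ ^ 2).trace := by
  have hR' : M - δ • (1 : Matrix κ κ ℝ) = M + (-δ) • (1 : Matrix κ κ ℝ) := by
    rw [neg_smul, sub_eq_add_neg]
  have hsq := sq_trace_inv_sub_trace_inv_le hM hδ.le htr hR
  have hshift := trace_inv_sub_trace_inv_add_smul_one hM.isUnit (hR' ▸ hR.isUnit)
  rw [← hR'] at hshift
  set R := M - δ • (1 : Matrix κ κ ℝ)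
  set D := R⁻¹.trace - M⁻¹.trace with hD
  have htrace : (R⁻¹ ^ 2).trace = D * (1 / δ) + δ * (R⁻¹ * M⁻¹ * R⁻¹).trace := by
    field_simp
    linarith [hD]
  linarith

end Shift

section Barrier

variable {κ ι : Type*} [Fintype κ] [DecidableEq κ]

/-- The quantity `U_A(v)` of Batson, Spielman and Srivastava for `M = u • 1 - A`: once the upper
barrier moves from `u` to `u + δ`, adding `t • vecMulVec v v` to `A` does not increase the upper
potential `tr M⁻¹` as long as `upperCost M δ v < t⁻¹`. -/
noncomputable def upperCost (M : Matrix κ κ ℝ) (δ : ℝ) (v : κ → ℝ) : ℝ :=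
  (v ⬝ᵥ ((M + δ • (1 : Matrix κ κ ℝ))⁻¹ ^ 2) *ᵥ v) /
    (M⁻¹.trace - (M + δ • (1 : Matrix κ κ ℝ))⁻¹.trace) +
  v ⬝ᵥ (M + δ • (1 : Matrix κ κ ℝ))⁻¹ *ᵥ v

/-- The quantity `L_A(v)` of Batson, Spielman and Srivastava for `M = A - l • 1`: once the lower
barrier moves from `l` to `l + δ`, adding `t • vecMulVec v v` to `A` does not increase the lower
potential `tr M⁻¹` as long as `t⁻¹ ≤ lowerGain M δ v`. -/
noncomputable def lowerGain (M : Matrix κ κ ℝ) (δ : ℝ) (v : κ → ℝ) : ℝ :=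
  (v ⬝ᵥ ((M - δ • (1 : Matrix κ κ ℝ))⁻¹ ^ 2) *ᵥ v) /
    ((M - δ • (1 : Matrix κ κ ℝ))⁻¹.trace - M⁻¹.trace) -
  v ⬝ᵥ (M - δ • (1 : Matrix κ κ ℝ))⁻¹ *ᵥ v

/-- The invariant of the barrier argument: the spectrum of `A` lies in the interval `(l, u)`, and
the barrier potentials `tr (A - l)⁻¹` and `tr (u - A)⁻¹` are at most `εL` and `εU`. -/
structure WithinBarriers (A : Matrix κ κ ℝ) (l u εL εU : ℝ) : Prop where
  posDef_lower : (A - l • (1 : Matrix κ κ ℝ)).PosDef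
  posDef_upper : (u • (1 : Matrix κ κ ℝ) - A).PosDef
  trace_lower_le : (A - l • (1 : Matrix κ κ ℝ))⁻¹.trace ≤ εL
  trace_upper_le : (u • (1 : Matrix κ κ ℝ) - A)⁻¹.trace ≤ εU

theorem WithinBarriers.zero {a b : ℝ} (ha : 0 < a) (hb : 0 < b) :
    WithinBarriers (0 : Matrix κ κ ℝ) (-a) b (Fintype.card κ / a) (Fintype.card κ / b) := by
  have htrace {c : ℝ} (hc : 0 < c) :
      (c • (1 : Matrix κ κ ℝ))⁻¹.trace = Fintype.card κ / c := by
    have hinv : (c • (1 : Matrix κ κ ℝ))⁻¹ = c⁻¹ • 1 :=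
      inv_eq_right_inv (by simp [smul_smul, hc.ne'])
    rw [hinv, trace_smul, trace_one, smul_eq_mul, div_eq_inv_mul]
  refine ⟨?_, ?_, ?_, ?_⟩
  · simpa using PosDef.one.smul ha
  · simpa using PosDef.one.smul hb
  · simpa using (htrace ha).le
  · simpa using (htrace hb).le

variable [Nonempty κ] {M : Matrix κ κ ℝ} {δ : ℝ}

theorem dotProduct_inv_mulVec_le_upperCost (hM : M.PosDef) (hδ : 0 < δ) (v : κ → ℝ) :
    v ⬝ᵥ (M + δ • (1 : Matrix κ κ ℝ))⁻¹ *ᵥ v ≤ upperCost M δ v := by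
  have hN : (M + δ • (1 : Matrix κ κ ℝ)).PosDef := hM.add (PosDef.one.smul hδ)
  refine le_add_of_nonneg_left (div_nonneg ?_ (sub_pos.2 (trace_inv_add_smul_one_lt hM hδ)).le)
  simpa only [star_trivial] using (hN.inv.posSemidef.pow 2).dotProduct_mulVec_nonneg v

theorem upperCost_nonneg (hM : M.PosDef) (hδ : 0 < δ) (v : κ → ℝ) : 0 ≤ upperCost M δ v := by
  have hN : (M + δ • (1 : Matrix κ κ ℝ)).PosDef := hM.add (PosDef.one.smul hδ)
  refine le_trans ?_ (dotProduct_inv_mulVec_le_upperCost hM hδ v)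
  simpa only [star_trivial] using hN.inv.posSemidef.dotProduct_mulVec_nonneg v

theorem sum_upperCost_lt [Fintype ι] {v : ι → κ → ℝ} (hv : ∑ i, vecMulVec (v i) (v i) = 1)
    (hM : M.PosDef) (hδ : 0 < δ) : ∑ i, upperCost M δ (v i) < 1 / δ + M⁻¹.trace := by
  have hlt := trace_inv_add_smul_one_lt hM hδ
  have hfrac : ((M + δ • (1 : Matrix κ κ ℝ))⁻¹ ^ 2).trace /
      (M⁻¹.trace - (M + δ • (1 : Matrix κ κ ℝ))⁻¹.trace) < 1 / δ := by
    rw [div_lt_div_iff₀ (sub_pos.2 hlt) hδ, one_mul, mul_comm]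
    exact mul_trace_inv_sq_lt hM hδ
  simp only [upperCost, Finset.sum_add_distrib, ← Finset.sum_div, sum_dotProduct_mulVec_self, hv,
    Matrix.mul_one]
  exact add_lt_add hfrac hlt

theorem le_sum_lowerGain [Fintype ι] {v : ι → κ → ℝ} (hv : ∑ i, vecMulVec (v i) (v i) = 1)
    (hM : M.PosDef) (hδ : 0 < δ) (htr : δ * M⁻¹.trace < 1) :
    1 / δ - M⁻¹.trace ≤ ∑ i, lowerGain M δ (v i) := by
  have hR := posDef_sub_smul_one hM htr
  have hlt := trace_inv_lt_trace_inv_sub_smul_one hδ hR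
  have hfrac : 1 / δ + ((M - δ • (1 : Matrix κ κ ℝ))⁻¹.trace - M⁻¹.trace) ≤
      ((M - δ • (1 : Matrix κ κ ℝ))⁻¹ ^ 2).trace /
        ((M - δ • (1 : Matrix κ κ ℝ))⁻¹.trace - M⁻¹.trace) := by
    rw [le_div_iff₀' (sub_pos.2 hlt)]
    exact mul_le_trace_inv_sq hM hδ htr.le hR
  simp only [lowerGain, Finset.sum_sub_distrib, ← Finset.sum_div, sum_dotProduct_mulVec_self, hv,
    Matrix.mul_one]
  linarith

theorem mul_dotProduct_inv_mulVec_lt_one_of_upperCost_lt (hM : M.PosDef) (hδ : 0 < δ)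
    {v : κ → ℝ} {t : ℝ} (ht : 0 < t) (hcost : upperCost M δ v < t⁻¹) :
    t * (v ⬝ᵥ (M + δ • (1 : Matrix κ κ ℝ))⁻¹ *ᵥ v) < 1 := by
  rw [← lt_inv_mul_iff₀ ht, mul_one]
  exact (dotProduct_inv_mulVec_le_upperCost hM hδ v).trans_lt hcost

theorem trace_inv_add_smul_one_sub_smul_vecMulVec_le (hM : M.PosDef) (hδ : 0 < δ) {v : κ → ℝ}
    {t : ℝ} (ht : 0 < t) (hcost : upperCost M δ v < t⁻¹) :
    (M + δ • (1 : Matrix κ κ ℝ) - t • vecMulVec v v)⁻¹.trace ≤ M⁻¹.trace := by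
  have hN : (M + δ • (1 : Matrix κ κ ℝ)).PosDef := hM.add (PosDef.one.smul hδ)
  have hlt := mul_dotProduct_inv_mulVec_lt_one_of_upperCost_lt hM hδ ht hcost
  have hD := sub_pos.2 (trace_inv_add_smul_one_lt hM hδ)
  rw [upperCost, ← lt_sub_iff_add_lt, div_lt_iff₀ hD] at hcost
  rw [sub_eq_add_neg, ← neg_smul, trace_inv_add_smul_vecMulVec hN.isUnit v v (-t) (by linarith)]
  set N := M + δ • (1 : Matrix κ κ ℝ)
  have hden : 0 < 1 + -t * (v ⬝ᵥ N⁻¹ *ᵥ v) := by linarith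
  have hmul : t * (v ⬝ᵥ (N⁻¹ ^ 2) *ᵥ v) ≤
      (M⁻¹.trace - N⁻¹.trace) * (1 + -t * (v ⬝ᵥ N⁻¹ *ᵥ v)) := by
    calc t * (v ⬝ᵥ (N⁻¹ ^ 2) *ᵥ v)
        ≤ t * ((t⁻¹ - v ⬝ᵥ N⁻¹ *ᵥ v) * (M⁻¹.trace - N⁻¹.trace)) :=
          mul_le_mul_of_nonneg_left hcost.le ht.le
      _ = (M⁻¹.trace - N⁻¹.trace) * (1 + -t * (v ⬝ᵥ N⁻¹ *ᵥ v)) := by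
          field_simp
          ring
  rw [neg_div, neg_mul, sub_neg_eq_add, ← le_sub_iff_add_le', div_mul_eq_mul_div,
    div_le_iff₀ hden]
  exact hmul

theorem trace_inv_sub_smul_one_add_smul_vecMulVec_le (hδ : 0 < δ)
    (hR : (M - δ • (1 : Matrix κ κ ℝ)).PosDef) {v : κ → ℝ} {t : ℝ} (ht : 0 < t)
    (hgain : t⁻¹ ≤ lowerGain M δ v) :
    (M - δ • (1 : Matrix κ κ ℝ) + t • vecMulVec v v)⁻¹.trace ≤ M⁻¹.trace := by
  have hD := sub_pos.2 (trace_inv_lt_trace_inv_sub_smul_one hδ hR)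
  rw [lowerGain, le_sub_iff_add_le, le_div_iff₀ hD] at hgain
  set R := M - δ • (1 : Matrix κ κ ℝ)
  have hnonneg : 0 ≤ v ⬝ᵥ R⁻¹ *ᵥ v := by
    simpa only [star_trivial] using hR.inv.posSemidef.dotProduct_mulVec_nonneg v
  have hden : 0 < 1 + t * (v ⬝ᵥ R⁻¹ *ᵥ v) := by positivity
  have hmul : (R⁻¹.trace - M⁻¹.trace) * (1 + t * (v ⬝ᵥ R⁻¹ *ᵥ v)) ≤
      t * (v ⬝ᵥ (R⁻¹ ^ 2) *ᵥ v) :=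
    calc (R⁻¹.trace - M⁻¹.trace) * (1 + t * (v ⬝ᵥ R⁻¹ *ᵥ v))
        = t * ((t⁻¹ + v ⬝ᵥ R⁻¹ *ᵥ v) * (R⁻¹.trace - M⁻¹.trace)) := by
          field_simp
      _ ≤ t * (v ⬝ᵥ (R⁻¹ ^ 2) *ᵥ v) := mul_le_mul_of_nonneg_left hgain ht.le
  rw [trace_inv_add_smul_vecMulVec hR.isUnit v v t hden.ne', sub_le_comm, div_mul_eq_mul_div,
    le_div_iff₀ hden]
  exact hmul

theorem WithinBarriers.add_smul_vecMulVec {A : Matrix κ κ ℝ} {l u εL εU δL δU : ℝ}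
    (hA : WithinBarriers A l u εL εU) (hδL : 0 < δL) (hδU : 0 < δU) (hδεL : δL * εL < 1)
    {v : κ → ℝ} {t : ℝ} (ht : 0 < t) (hcost : upperCost (u • (1 : Matrix κ κ ℝ) - A) δU v < t⁻¹)
    (hgain : t⁻¹ ≤ lowerGain (A - l • (1 : Matrix κ κ ℝ)) δL v) :
    WithinBarriers (A + t • vecMulVec v v) (l + δL) (u + δU) εL εU := by
  obtain ⟨hL, hU, htrL, htrU⟩ := hA
  have hR := posDef_sub_smul_one hL ((mul_le_mul_of_nonneg_left htrL hδL.le).trans_lt hδεL)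
  have hlower : A + t • vecMulVec v v - (l + δL) • (1 : Matrix κ κ ℝ) =
      A - l • (1 : Matrix κ κ ℝ) - δL • (1 : Matrix κ κ ℝ) + t • vecMulVec v v := by module
  have hupper : (u + δU) • (1 : Matrix κ κ ℝ) - (A + t • vecMulVec v v) =
      u • (1 : Matrix κ κ ℝ) - A + δU • (1 : Matrix κ κ ℝ) - t • vecMulVec v v := by module
  refine ⟨?_, ?_, ?_, ?_⟩
  · rw [hlower]
    exact hR.add_posSemidef ((posSemidef_vecMulVec_self_star v).smul ht.le)
  · rw [hupper]
    exact posDef_sub_smul_vecMulVec (hU.add (PosDef.one.smul hδU))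
      (mul_dotProduct_inv_mulVec_lt_one_of_upperCost_lt hU hδU ht hcost)
  · rw [hlower]
    exact (trace_inv_sub_smul_one_add_smul_vecMulVec_le hδL hR ht hgain).trans htrL
  · rw [hupper]
    exact (trace_inv_add_smul_one_sub_smul_vecMulVec_le hU hδU ht hcost).trans htrU

theorem WithinBarriers.exists_add_smul_vecMulVec [Fintype ι] {v : ι → κ → ℝ}
    (hv : ∑ i, vecMulVec (v i) (v i) = 1) {A : Matrix κ κ ℝ} {l u εL εU δL δU : ℝ}
    (hA : WithinBarriers A l u εL εU) (hδL : 0 < δL) (hδU : 0 < δU)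
    (hδ : 1 / δU + εU ≤ 1 / δL - εL) :
    ∃ i, ∃ t : ℝ, 0 ≤ t ∧
      WithinBarriers (A + t • vecMulVec (v i) (v i)) (l + δL) (u + δU) εL εU := by
  obtain ⟨hL, hU, htrL, htrU⟩ := id hA
  have hδεL : δL * εL < 1 := by
    rw [← lt_div_iff₀' hδL]
    linarith [hU.inv.trace_pos, one_div_pos.2 hδU]
  have hδtr := (mul_le_mul_of_nonneg_left htrL hδL.le).trans_lt hδεL
  obtain ⟨i, -, hi⟩ : ∃ i ∈ univ, upperCost (u • (1 : Matrix κ κ ℝ) - A) δU (v i) <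
      lowerGain (A - l • (1 : Matrix κ κ ℝ)) δL (v i) := by
    refine Finset.exists_lt_of_sum_lt ?_
    linarith [sum_upperCost_lt hv hU hδU, le_sum_lowerGain hv hL hδL hδtr]
  have hgain := (upperCost_nonneg hU hδU (v i)).trans_lt hi
  exact ⟨i, _, (inv_pos.2 hgain).le, hA.add_smul_vecMulVec hδL hδU hδεL (inv_pos.2 hgain)
    (by rwa [inv_inv]) (inv_inv _).le⟩

theorem WithinBarriers.exists_sum_smul_vecMulVec [Fintype ι] {v : ι → κ → ℝ}
    (hv : ∑ i, vecMulVec (v i) (v i) = 1) {l u εL εU δL δU : ℝ}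
    (h0 : WithinBarriers (0 : Matrix κ κ ℝ) l u εL εU) (hδL : 0 < δL) (hδU : 0 < δU)
    (hδ : 1 / δU + εU ≤ 1 / δL - εL) (q : ℕ) :
    ∃ s : ι → ℝ, (∀ i, 0 ≤ s i) ∧ #{i | s i ≠ 0} ≤ q ∧
      WithinBarriers (∑ i, s i • vecMulVec (v i) (v i)) (l + q * δL) (u + q * δU) εL εU := by
  classical
  induction q with
  | zero => exact ⟨0, by simp, by simp, by simpa using h0⟩
  | succ q ih =>
    obtain ⟨s, hs, hcard, hA⟩ := ih
    obtain ⟨i, t, ht, hA'⟩ := hA.exists_add_smul_vecMulVec hv hδL hδU hδ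
    have hnonneg : 0 ≤ s + Pi.single i t := add_nonneg hs (Pi.single_nonneg.2 ht)
    refine ⟨s + Pi.single i t, hnonneg, ?_, ?_⟩
    · calc #{j | (s + Pi.single i t : ι → ℝ) j ≠ 0} ≤ #(insert i ({j | s j ≠ 0} : Finset ι)) := by
            refine card_le_card fun j hj => ?_
            by_cases hji : j = i
            · simp [hji]
            · simpa [hji] using hj
        _ ≤ q + 1 := (card_insert_le _ _).trans (Nat.add_le_add_right hcard 1)
    · have hsum : ∑ j, (s + Pi.single i t : ι → ℝ) j • vecMulVec (v j) (v j) =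
          ∑ j, s j • vecMulVec (v j) (v j) + t • vecMulVec (v i) (v i) := by
        simp [add_smul, Finset.sum_add_distrib, Pi.single_apply, ite_smul]
      rw [hsum]
      convert hA' using 1 <;> push_cast <;> ring

end Barrier

section Sparsification

open scoped MatrixOrder

/-- The approximation factor `(d + 1 + 2 √d) / (d + 1 - 2 √d)` of the sparsifiers constructed
below; it bounds the ratio of the extreme nonzero Laplacian eigenvalues of a `d + 1`-regular
Ramanujan graph, whence the name. -/
noncomputable def ramanujanRatio (d : ℝ) : ℝ :=
  (d + 1 + 2 * Real.sqrt d) / (d + 1 - 2 * Real.sqrt d)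

theorem ramanujanRatio_eq_sq {d : ℝ} (hd : 0 ≤ d) :
    ramanujanRatio d = ((√d + 1) / (√d - 1)) ^ 2 := by
  rw [ramanujanRatio, div_pow]
  congr 1 <;> linear_combination -(Real.sq_sqrt hd)

variable {κ ι : Type*} [Fintype κ] [DecidableEq κ] [Fintype ι]

theorem WithinBarriers.smul_one_le {A : Matrix κ κ ℝ} {l u εL εU : ℝ}
    (hA : WithinBarriers A l u εL εU) : l • 1 ≤ A :=
  le_iff.2 hA.posDef_lower.posSemidef

theorem WithinBarriers.le_smul_one {A : Matrix κ κ ℝ} {l u εL εU : ℝ}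
    (hA : WithinBarriers A l u εL εU) : A ≤ u • 1 :=
  le_iff.2 hA.posDef_upper.posSemidef

theorem exists_sum_smul_vecMulVec_between [Nonempty κ] {v : ι → κ → ℝ}
    (hv : ∑ i, vecMulVec (v i) (v i) = 1) {r : ℝ} (hr : 1 < r) (q : ℕ) :
    ∃ s : ι → ℝ, (∀ i, 0 ≤ s i) ∧ #{i | s i ≠ 0} ≤ q ∧
      (q - Fintype.card κ * r) • 1 ≤ ∑ i, s i • vecMulVec (v i) (v i) ∧
      ∑ i, s i • vecMulVec (v i) (v i) ≤
        ((r + 1) / (r - 1) * (q + Fintype.card κ * r)) • 1 := by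
  have hr0 : 0 < r := one_pos.trans hr
  have hr1 : 0 < r - 1 := sub_pos.2 hr
  have hcard : 0 < (Fintype.card κ : ℝ) := Nat.cast_pos.2 Fintype.card_pos
  have hδU : 0 < (r + 1) / (r - 1) := by positivity
  have hstart : WithinBarriers (0 : Matrix κ κ ℝ) _ _ _ _ :=
    .zero (mul_pos hcard hr0) (mul_pos hδU (mul_pos hcard hr0))
  obtain ⟨s, hs, hsparse, hA⟩ :=
    hstart.exists_sum_smul_vecMulVec hv one_pos hδU (by field_simp; linarith) q
  refine ⟨s, hs, hsparse, ?_, ?_⟩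
  · convert hA.smul_one_le using 2
    ring
  · convert hA.le_smul_one using 2
    ring

theorem exists_sparse_sum_vecMulVec_of_isotropic {v : ι → κ → ℝ}
    (hv : ∑ i, vecMulVec (v i) (v i) = 1) {d : ℝ} (hd : 1 < d) :
    ∃ s : ι → ℝ, (∀ i, 0 ≤ s i) ∧ #{i | s i ≠ 0} ≤ ⌈d * Fintype.card κ⌉₊ ∧
      1 ≤ ∑ i, s i • vecMulVec (v i) (v i) ∧
      ∑ i, s i • vecMulVec (v i) (v i) ≤ ramanujanRatio d • 1 := by
  rcases isEmpty_or_nonempty κ with hκ | hκ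
  · exact ⟨0, by simp, by simp, (Subsingleton.elim _ _).le, (Subsingleton.elim _ _).le⟩
  set r := √d
  have hr : 1 < r := Real.lt_sqrt_of_sq_lt (by simpa using hd)
  have hrd : r ^ 2 = d := Real.sq_sqrt (by linarith)
  set k : ℝ := (Fintype.card κ : ℝ)
  have hk : 0 < k := Nat.cast_pos.2 Fintype.card_pos
  set q := ⌈d * k⌉₊
  have hq : r ^ 2 * k ≤ q := hrd ▸ Nat.le_ceil _
  obtain ⟨s, hs, hsparse, hlower, hupper⟩ := exists_sum_smul_vecMulVec_between hv hr q
  have hl : 0 < q - k * r := by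
    nlinarith [mul_pos (mul_pos hk (one_pos.trans hr)) (sub_pos.2 hr)]
  have hscale : (r + 1) / (r - 1) * (q + k * r) ≤ ramanujanRatio d * (q - k * r) := by
    have hr1 : 0 < r - 1 := sub_pos.2 hr
    have hqk : q + k * r ≤ (r + 1) / (r - 1) * (q - k * r) := by
      rw [div_mul_eq_mul_div, le_div_iff₀ hr1]
      linarith
    rw [ramanujanRatio_eq_sq (by linarith), sq, mul_assoc]
    exact mul_le_mul_of_nonneg_left hqk (by positivity)
  set A := ∑ i, s i • vecMulVec (v i) (v i)
  have hsum : ∑ i, ((q - k * r)⁻¹ * s i) • vecMulVec (v i) (v i) = (q - k * r)⁻¹ • A := by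
    simp only [mul_smul, ← Finset.smul_sum, A]
  refine ⟨fun i => (q - k * r)⁻¹ * s i, fun i => mul_nonneg (inv_pos.2 hl).le (hs i), ?_, ?_, ?_⟩
  · simpa [hl.ne'] using hsparse
  · rw [hsum, le_inv_smul_iff_of_pos hl]
    exact hlower
  · rw [hsum, inv_smul_le_iff_of_pos hl, smul_smul, mul_comm]
    exact hupper.trans (smul_le_smul_of_nonneg_right hscale zero_le_one)

end Sparsification

section LoewnerOrder

open scoped MatrixOrder

theorem mul_mul_transpose_mono {V κ : Type*} [Finite V] [Fintype κ] {A A' : Matrix κ κ ℝ}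
    (h : A ≤ A') (B : Matrix V κ ℝ) : B * A * Bᵀ ≤ B * A' * Bᵀ := by
  rw [le_iff, ← Matrix.sub_mul, ← Matrix.mul_sub]
  simpa only [conjTranspose_eq_transpose_of_trivial] using
    (le_iff.1 h).mul_mul_conjTranspose_same B

theorem dotProduct_mulVec_mono {V : Type*} [Fintype V] {A A' : Matrix V V ℝ} (h : A ≤ A')
    (x : V → ℝ) : x ⬝ᵥ A *ᵥ x ≤ x ⬝ᵥ A' *ᵥ x := by
  have := (le_iff.1 h).dotProduct_mulVec_nonneg x
  rwa [star_trivial, sub_mulVec, dotProduct_sub, sub_nonneg] at this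

theorem mul_sum_smul_vecMulVec_mul_transpose {R ι V κ : Type*} [CommSemiring R] [Fintype ι]
    [Fintype V] (P : Matrix κ V R) (c : ι → R) (b : ι → V → R) :
    P * (∑ i, c i • vecMulVec (b i) (b i)) * Pᵀ =
      ∑ i, c i • vecMulVec (P *ᵥ b i) (P *ᵥ b i) := by
  simp only [Matrix.mul_sum, Matrix.sum_mul, Matrix.mul_smul, Matrix.smul_mul, mul_vecMulVec,
    vecMulVec_mul, vecMul_transpose]

theorem mulVec_eq_zero_of_mul_sum_vecMulVec_eq_zero {ι V κ : Type*} [Fintype ι] [Fintype V]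
    [Finite κ] {P : Matrix κ V ℝ} {b : ι → V → ℝ} (hP : P * ∑ i, vecMulVec (b i) (b i) = 0)
    (i : ι) : P *ᵥ b i = 0 := by
  have hsum : ∑ i, vecMulVec (P *ᵥ b i) (P *ᵥ b i) = 0 := by
    have := mul_sum_smul_vecMulVec_mul_transpose P 1 b
    simpa only [Pi.one_apply, one_smul, hP, Matrix.zero_mul, eq_comm] using this
  have hnonneg (j : ι) : 0 ≤ vecMulVec (P *ᵥ b j) (P *ᵥ b j) :=
    (posSemidef_vecMulVec_self_star (P *ᵥ b j)).nonneg
  have := (Finset.sum_eq_zero_iff_of_nonneg fun j _ => hnonneg j).1 hsum i (mem_univ i)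
  simpa using this

end LoewnerOrder

section RankFactorization

open scoped MatrixOrder

variable {V : Type*} [Fintype V]

theorem exists_mul_transpose_eq_and_mul_eq_one {L : Matrix V V ℝ} (hL : L.PosSemidef) :
    ∃ (B : Matrix V (Fin L.rank) ℝ) (C : Matrix (Fin L.rank) V ℝ), B * Bᵀ = L ∧ C * B = 1 := by
  classical
  set U : Matrix V V ℝ := (hL.isHermitian.eigenvectorUnitary : Matrix V V ℝ)
  set lam := hL.isHermitian.eigenvalues
  have hU : Uᵀ * U = 1 := Unitary.coe_star_mul_self hL.isHermitian.eigenvectorUnitary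
  have hspectral : U * diagonal lam * Uᵀ = L := hL.isHermitian.spectral_theorem.symm
  obtain ⟨e⟩ : Nonempty (Fin L.rank ≃ {j // lam j ≠ 0}) :=
    ⟨(Fintype.equivFinOfCardEq hL.isHermitian.rank_eq_card_non_zero_eigs.symm).symm⟩
  have hpos (j : Fin L.rank) : 0 < lam (e j) := (hL.eigenvalues_nonneg _).lt_of_ne' (e j).2
  have hinj : Function.Injective fun j => (e j : V) := Subtype.val_injective.comp e.injective
  refine ⟨of fun i j => U i (e j) * √(lam (e j)), of fun j i => (√(lam (e j)))⁻¹ * U i (e j),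
    ?_, ?_⟩
  · refine Eq.trans ?_ hspectral
    ext i k
    rw [mul_apply, mul_apply]
    simp only [of_apply, transpose_apply, mul_diagonal]
    refine Fintype.sum_of_injective _ hinj _ _ (fun j hj => ?_) fun j => ?_
    · have : lam j = 0 := by
        by_contra hne
        exact hj ⟨e.symm ⟨j, hne⟩, by simp⟩
      rw [this, mul_zero, zero_mul]
    · linear_combination U i (e j) * U k (e j) * Real.mul_self_sqrt (hpos j).le
  · ext j k
    have hUjk : ∑ i, U i (e j) * U i (e k) = (1 : Matrix V V ℝ) (e j) (e k) := congr_fun₂ hU _ _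
    calc ∑ i, (√(lam (e j)))⁻¹ * U i (e j) * (U i (e k) * √(lam (e k)))
        = (√(lam (e j)))⁻¹ * (∑ i, U i (e j) * U i (e k)) * √(lam (e k)) := by
          rw [Finset.mul_sum, Finset.sum_mul]
          exact Finset.sum_congr rfl fun i _ => by ring
      _ = (1 : Matrix (Fin L.rank) (Fin L.rank) ℝ) j k := by
          rw [hUjk]
          rcases eq_or_ne j k with rfl | hjk
          · simp [(Real.sqrt_pos.2 (hpos j)).ne']
          · simp [hjk, hinj.ne hjk]

theorem mul_mulVec_eq_of_sum_vecMulVec_eq {ι κ : Type*} [Fintype ι] [Fintype κ] [DecidableEq κ]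
    {b : ι → V → ℝ} {B : Matrix V κ ℝ} {C : Matrix κ V ℝ}
    (hB : B * Bᵀ = ∑ i, vecMulVec (b i) (b i)) (hC : C * B = 1) (i : ι) :
    B *ᵥ C *ᵥ b i = b i := by
  classical
  have hP : (1 - B * C) * ∑ i, vecMulVec (b i) (b i) = 0 := by
    rw [← hB, ← Matrix.mul_assoc, Matrix.sub_mul, Matrix.mul_assoc B, hC, Matrix.one_mul,
      Matrix.mul_one, sub_self, Matrix.zero_mul]
  have := mulVec_eq_zero_of_mul_sum_vecMulVec_eq_zero hP i
  rw [sub_mulVec, one_mulVec, sub_eq_zero, ← mulVec_mulVec] at this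
  exact this.symm

theorem exists_sparse_sum_vecMulVec {ι : Type*} [Fintype ι] (b : ι → V → ℝ) {d : ℝ}
    (hd : 1 < d) :
    ∃ s : ι → ℝ, (∀ i, 0 ≤ s i) ∧
      #{i | s i ≠ 0} ≤ ⌈d * (∑ i, vecMulVec (b i) (b i)).rank⌉₊ ∧
      ∑ i, vecMulVec (b i) (b i) ≤ ∑ i, s i • vecMulVec (b i) (b i) ∧
      ∑ i, s i • vecMulVec (b i) (b i) ≤ ramanujanRatio d • ∑ i, vecMulVec (b i) (b i) := by
  set L := ∑ i, vecMulVec (b i) (b i)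
  have hpsd : L.PosSemidef := posSemidef_sum _ fun i _ => posSemidef_vecMulVec_self_star (b i)
  obtain ⟨B, C, hB, hC⟩ := exists_mul_transpose_eq_and_mul_eq_one hpsd
  have hisotropic : ∑ i, vecMulVec (C *ᵥ b i) (C *ᵥ b i) = 1 :=
    calc ∑ i, vecMulVec (C *ᵥ b i) (C *ᵥ b i) = C * L * Cᵀ := by
          simpa only [Pi.one_apply, one_smul] using
            (mul_sum_smul_vecMulVec_mul_transpose C 1 b).symm
      _ = C * (B * Bᵀ) * Cᵀ := by rw [hB]
      _ = (C * B) * (C * B)ᵀ := by simp only [transpose_mul, Matrix.mul_assoc]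
      _ = 1 := by rw [hC, transpose_one, Matrix.mul_one]
  obtain ⟨s, hs, hsparse, hlower, hupper⟩ := exists_sparse_sum_vecMulVec_of_isotropic hisotropic hd
  have hsum : B * (∑ i, s i • vecMulVec (C *ᵥ b i) (C *ᵥ b i)) * Bᵀ =
      ∑ i, s i • vecMulVec (b i) (b i) := by
    simp only [mul_sum_smul_vecMulVec_mul_transpose, mul_mulVec_eq_of_sum_vecMulVec_eq hB hC]
  refine ⟨s, hs, by simpa only [Fintype.card_fin] using hsparse, ?_, ?_⟩
  · simpa only [hsum, Matrix.mul_one, hB] using mul_mul_transpose_mono hlower B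
  · simpa only [hsum, Matrix.mul_smul, Matrix.smul_mul, Matrix.mul_one, hB] using
      mul_mul_transpose_mono hupper B

theorem exists_sparse_sum_smul_vecMulVec {ι : Type*} [Fintype ι] (b : ι → V → ℝ) {c : ι → ℝ}
    (hc : ∀ i, 0 ≤ c i) {d : ℝ} (hd : 1 < d) :
    ∃ c' : ι → ℝ, (∀ i, 0 ≤ c' i) ∧ (∀ i, c' i ≠ 0 → c i ≠ 0) ∧
      #{i | c' i ≠ 0} ≤ ⌈d * (∑ i, c i • vecMulVec (b i) (b i)).rank⌉₊ ∧
      ∑ i, c i • vecMulVec (b i) (b i) ≤ ∑ i, c' i • vecMulVec (b i) (b i) ∧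
      ∑ i, c' i • vecMulVec (b i) (b i) ≤
        ramanujanRatio d • ∑ i, c i • vecMulVec (b i) (b i) := by
  obtain ⟨s, hs, hsparse, hlower, hupper⟩ := exists_sparse_sum_vecMulVec (fun i => √(c i) • b i) hd
  simp only [smul_vecMulVec, vecMulVec_smul, smul_smul, Real.mul_self_sqrt (hc _)]
    at hsparse hlower hupper
  refine ⟨fun i => s i * c i, fun i => mul_nonneg (hs i) (hc i), fun i => right_ne_zero_of_mul,
    (card_le_card fun i hi => ?_).trans hsparse, hlower, hupper⟩
  simp only [mem_filter_univ] at hi ⊢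
  exact left_ne_zero_of_mul hi

end RankFactorization

theorem rank_lt_card_of_mulVec_eq_zero {K l m : Type*} [Field K] [Fintype m] {A : Matrix l m K}
    {v : m → K} (hv : v ≠ 0) (hAv : A *ᵥ v = 0) : A.rank < Fintype.card m := by
  have hker : 0 < Module.finrank K (LinearMap.ker A.mulVecLin) :=
    Submodule.one_le_finrank_iff.2 fun hbot => hv ((LinearMap.ker_eq_bot'.1 hbot) v hAv)
  have := LinearMap.finrank_range_add_finrank_ker A.mulVecLin
  rw [Module.finrank_fintype_fun_eq_card] at this
  rw [Matrix.rank]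
  lia

section Laplacian

variable {n : ℕ}

/-- The signed incidence vector `eᵢ - eⱼ` of an ordered pair of vertices. -/
def incidenceVec (p : Fin n × Fin n) : Fin n → ℝ :=
  Pi.single p.1 1 - Pi.single p.2 1

theorem incidenceVec_swap (p : Fin n × Fin n) : incidenceVec p.swap = -incidenceVec p :=
  (neg_sub _ _).symm

theorem incidenceVec_dotProduct_one (p : Fin n × Fin n) : incidenceVec p ⬝ᵥ 1 = 0 := by
  simp [incidenceVec]

theorem weightedLapMatrix_eq_sum (w : Fin n → Fin n → ℝ) :
    weightedLapMatrix w =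
      (1 / 2 : ℝ) • ∑ p : Fin n × Fin n, w p.1 p.2 • vecMulVec (incidenceVec p) (incidenceVec p) :=
  congrArg _ (Fintype.sum_prod_type' _).symm

theorem weightedLapMatrix_add_swap (c : Fin n × Fin n → ℝ) :
    weightedLapMatrix (fun i j => c (i, j) + c (j, i)) =
      ∑ p, c p • vecMulVec (incidenceVec p) (incidenceVec p) := by
  have hswap : ∑ p : Fin n × Fin n, c p.swap • vecMulVec (incidenceVec p) (incidenceVec p) =
      ∑ p, c p • vecMulVec (incidenceVec p) (incidenceVec p) :=
    Fintype.sum_equiv (Equiv.prodComm _ _) _ _ fun p => by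
      simp only [Equiv.prodComm_apply, incidenceVec_swap, neg_vecMulVec, vecMulVec_neg, neg_neg]
  have hsplit : weightedLapMatrix (fun i j => c (i, j) + c (j, i)) =
      (1 / 2 : ℝ) • (∑ p, c p • vecMulVec (incidenceVec p) (incidenceVec p) +
        ∑ p : Fin n × Fin n, c p.swap • vecMulVec (incidenceVec p) (incidenceVec p)) := by
    rw [weightedLapMatrix_eq_sum, ← Finset.sum_add_distrib]
    simp only [add_smul, Prod.swap]
  rw [hsplit, hswap]
  module

theorem weightedLapMatrix_mulVec_one (w : Fin n → Fin n → ℝ) :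
    weightedLapMatrix w *ᵥ 1 = 0 := by
  simp [weightedLapMatrix_eq_sum, smul_mulVec, sum_mulVec, vecMulVec_mulVec,
    incidenceVec_dotProduct_one]

theorem rank_weightedLapMatrix_le (w : Fin n → Fin n → ℝ) :
    (weightedLapMatrix w).rank ≤ n - 1 := by
  rcases n.eq_zero_or_pos with rfl | hn
  · simpa using rank_le_width (weightedLapMatrix w)
  have : Nonempty (Fin n) := ⟨⟨0, hn⟩⟩
  have hlt := rank_lt_card_of_mulVec_eq_zero one_ne_zero (weightedLapMatrix_mulVec_one w)
  rw [Fintype.card_fin] at hlt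
  exact Nat.le_sub_one_of_lt hlt

theorem natCeil_mul_rank_weightedLapMatrix_le (w : Fin n → Fin n → ℝ) {d : ℝ} (hd : 0 ≤ d) :
    ⌈d * (weightedLapMatrix w).rank⌉₊ ≤ ⌈d * ((n : ℝ) - 1)⌉₊ := by
  have hrank := rank_weightedLapMatrix_le w
  rcases n.eq_zero_or_pos with rfl | hn
  · simp [Nat.le_zero.1 hrank]
  · rw [← Nat.cast_pred hn]
    gcongr

/-- The weight function `w` with every unordered edge recorded only at its increasing ordered
pair, so that each edge contributes one rank-one term to the Laplacian. -/
def upperPart (w : Fin n → Fin n → ℝ) (p : Fin n × Fin n) : ℝ :=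
  if p.1 < p.2 then w p.1 p.2 else 0

theorem upperPart_nonneg {w : Fin n → Fin n → ℝ} (hnn : ∀ i j, 0 ≤ w i j) (p : Fin n × Fin n) :
    0 ≤ upperPart w p :=
  ite_nonneg (hnn _ _) le_rfl

theorem upperPart_add_swap {w : Fin n → Fin n → ℝ} (hsym : ∀ i j, w i j = w j i)
    (hdiag : ∀ i, w i i = 0) (i j : Fin n) : upperPart w (i, j) + upperPart w (j, i) = w i j := by
  rcases lt_trichotomy i j with h | rfl | h
  · simp [upperPart, h, h.not_gt]
  · simp [upperPart, hdiag]
  · simp [upperPart, h, h.not_gt, hsym i j]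

theorem lt_and_ne_zero_of_upperPart_ne_zero {w : Fin n → Fin n → ℝ} {p : Fin n × Fin n}
    (hp : upperPart w p ≠ 0) : p.1 < p.2 ∧ w p.1 p.2 ≠ 0 :=
  ite_ne_right_iff.1 hp

theorem weightedLapMatrix_eq_sum_upperPart {w : Fin n → Fin n → ℝ} (hsym : ∀ i j, w i j = w j i)
    (hdiag : ∀ i, w i i = 0) :
    weightedLapMatrix w =
      ∑ p, upperPart w p • vecMulVec (incidenceVec p) (incidenceVec p) := by
  simp only [← weightedLapMatrix_add_swap, upperPart_add_swap hsym hdiag]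

end Laplacian

/-- **Twice-Ramanujan spectral sparsifiers.**  For every weighted finite simple graph
`G` on `n` vertices (weights `w` nonnegative, symmetric, supported on the edges of `G`)
and every real `d > 1`, there exist nonnegative weights `w'` on the edges of `G`,
nonzero on at most `⌈d (n-1)⌉` edges, such that for all `x ∈ ℝ^V`
`xᵀ L_G x ≤ xᵀ L_H x ≤ ((d + 1 + 2√d)/(d + 1 - 2√d)) xᵀ L_G x`. -/
theorem exists_spectral_sparsifier
    {n : ℕ} (G : SimpleGraph (Fin n)) (w : Fin n → Fin n → ℝ)
    (hsym : ∀ i j, w i j = w j i) (hnn : ∀ i j, 0 ≤ w i j)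
    (hsupp : ∀ i j, w i j ≠ 0 → G.Adj i j)
    (d : ℝ) (hd : 1 < d) :
    ∃ w' : Fin n → Fin n → ℝ,
      (∀ i j, w' i j = w' j i) ∧ (∀ i j, 0 ≤ w' i j) ∧
      (∀ i j, w' i j ≠ 0 → G.Adj i j) ∧
      (Finset.univ.filter
          (fun p : Fin n × Fin n => p.1 < p.2 ∧ w' p.1 p.2 ≠ 0)).card ≤
        ⌈d * ((n : ℝ) - 1)⌉₊ ∧
      ∀ x : Fin n → ℝ,
        x ⬝ᵥ (weightedLapMatrix w).mulVec x ≤ x ⬝ᵥ (weightedLapMatrix w').mulVec x ∧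
        x ⬝ᵥ (weightedLapMatrix w').mulVec x ≤
          ((d + 1 + 2 * Real.sqrt d) / (d + 1 - 2 * Real.sqrt d)) *
            (x ⬝ᵥ (weightedLapMatrix w).mulVec x) := by
  have hdiag (i : Fin n) : w i i = 0 := not_not.1 fun h => G.irrefl (hsupp i i h)
  obtain ⟨c, hc, hcw, hsparse, hlower, hupper⟩ :=
    exists_sparse_sum_smul_vecMulVec incidenceVec (upperPart_nonneg hnn) hd
  rw [← weightedLapMatrix_eq_sum_upperPart hsym hdiag] at hsparse hlower hupper
  rw [← weightedLapMatrix_add_swap] at hlower hupper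
  have hcG (i j : Fin n) (hij : c (i, j) ≠ 0) : i < j ∧ G.Adj i j :=
    (lt_and_ne_zero_of_upperPart_ne_zero (hcw _ hij)).imp_right (hsupp i j)
  refine ⟨fun i j => c (i, j) + c (j, i), fun i j => add_comm _ _,
    fun i j => add_nonneg (hc _) (hc _), fun i j hij => ?_, ?_, fun x =>
    ⟨dotProduct_mulVec_mono hlower x, ?_⟩⟩
  · by_cases h : c (i, j) = 0
    · exact (hcG j i fun h' => hij (by simp only [h, h', add_zero])).2.symm
    · exact (hcG i j h).2
  · refine (card_le_card fun p hp => ?_).trans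
      (hsparse.trans (natCeil_mul_rank_weightedLapMatrix_le w (zero_le_one.trans hd.le)))
    simp only [mem_filter_univ] at hp ⊢
    have hswap : c (p.2, p.1) = 0 := not_not.1 fun h => hp.1.not_gt (hcG _ _ h).1
    simpa only [hswap, add_zero] using hp.2
  · have := dotProduct_mulVec_mono hupper x
    rwa [smul_mulVec, dotProduct_smul, smul_eq_mul] at this
end
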